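/- Suppose that (−1)^{k+1} · F(t, k(δ + a)) < 0 for all t ∈ ℝ and all k = 1, …, 2n. Fix i ∈ {1,…,n}, t ∈ ℝ, and positions xⱼ with (2j − 1)(δ + a) ≤ xⱼ ≤ 2j(δ + a) for every j ∈ {1,…,n} \ {i} (and x₀ = 0, x_{n+1} = (2n+1)(δ + a)). Then: (a) if xᵢ = (2i − 1)(δ + a) (left endpoint), the acceleration with ẋᵢ = 0 is strictly negative: −V′(xᵢ − x_{i−1}) + V′(x_{i+1} − xᵢ) + F(t, xᵢ) < 0; (b) if xᵢ = 2i(δ + a) (right endpoint), it is strictly positive: −V′(xᵢ − x_{i−1}) + V′(x_{i+1} − xᵢ) + F(t, xᵢ) > 0. That is, at the boundary of the block [(2i−1)(δ+a), 2i(δ+a)] with zero velocity, the acceleration of the i-th oscillator is directed outward. -/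

import Mathlib

/-- The Morse potential `V(x) = ½(1 − e^{−(x−δ)})²`. -/
noncomputable def morseV (δ : ℝ) (x : ℝ) : ℝ := (1 - Real.exp (-(x - δ))) ^ 2 / 2

theorem morseV_deriv (δ x : ℝ) :
    deriv (morseV δ) x = (1 - Real.exp (-(x - δ))) * Real.exp (-(x - δ)) := by
  have h1 : HasDerivAt (fun y : ℝ => -(y - δ)) (-1) x := ((hasDerivAt_id x).sub_const δ).neg
  have h2 := ((h1.exp.const_sub 1).pow 2).div_const 2
  have h3 : HasDerivAt (morseV δ) _ x := h2
  rw [h3.deriv]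
  push_cast
  ring

theorem morseV_deriv_anti (δ a u v : ℝ) (ha : Real.log 2 ≤ a) (hu : δ + a ≤ u) (huv : u ≤ v) :
    deriv (morseV δ) v ≤ deriv (morseV δ) u := by
  rw [morseV_deriv, morseV_deriv]
  have h1 : Real.exp (-(v - δ)) ≤ Real.exp (-(u - δ)) := Real.exp_le_exp.mpr (by linarith)
  have h2 : Real.exp (-(u - δ)) ≤ 1 / 2 := by
    calc Real.exp (-(u - δ)) ≤ Real.exp (-Real.log 2) := Real.exp_le_exp.mpr (by linarith)
      _ = 1 / 2 := by rw [Real.exp_neg, Real.exp_log (by norm_num)]; norm_num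
  nlinarith [mul_nonneg (sub_nonneg.mpr h1)
    (by linarith : (0:ℝ) ≤ 1 - Real.exp (-(u - δ)) - Real.exp (-(v - δ)))]

theorem oscillator_chain_boundary_outward
    (n : ℕ) (hn : 1 ≤ n) (γ δ a T : ℝ)
    (hγ : 0 < γ) (hδ : 0 < δ) (ha : Real.log 2 ≤ a) (hT : 0 < T)
    (F : ℝ → ℝ → ℝ)
    (hF : ContDiff ℝ (⊤ : ℕ∞) (fun u : ℝ × ℝ => F u.1 u.2))
    (hFper : ∀ t x, F (t + T) x = F t x)
    -- (−1)^{k+1}·F(t, k(δ+a)) < 0 for all t and k = 1,…,2n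
    (hcond : ∀ t : ℝ, ∀ k : ℕ, 1 ≤ k → k ≤ 2 * n →
      (-1 : ℝ) ^ (k + 1) * F t ((k : ℝ) * (δ + a)) < 0)
    -- a fixed index, time and positions
    (i : ℕ) (hi1 : 1 ≤ i) (hi2 : i ≤ n) (t : ℝ) (x : ℕ → ℝ)
    (hx0 : x 0 = 0) (hxn : x (n + 1) = (2 * (n : ℝ) + 1) * (δ + a))
    (hxj : ∀ j : ℕ, 1 ≤ j → j ≤ n → j ≠ i →
      (2 * (j : ℝ) - 1) * (δ + a) ≤ x j ∧ x j ≤ 2 * (j : ℝ) * (δ + a)) :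
    -- (a) at the left endpoint the acceleration (with ẋᵢ = 0) is strictly negative
    (x i = (2 * (i : ℝ) - 1) * (δ + a) →
      -deriv (morseV δ) (x i - x (i - 1)) + deriv (morseV δ) (x (i + 1) - x i)
        + F t (x i) < 0) ∧
    -- (b) at the right endpoint it is strictly positive
    (x i = 2 * (i : ℝ) * (δ + a) →
      0 < -deriv (morseV δ) (x i - x (i - 1)) + deriv (morseV δ) (x (i + 1) - x i)
        + F t (x i)) := by
  have hL : 0 < δ + a := by linarith [Real.log_pos (by norm_num : (1:ℝ) < 2)]
  obtain ⟨m, rfl⟩ : ∃ m, i = m + 1 := ⟨i - 1, by omega⟩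
  have hlo : (2 * (m : ℝ) - 1) * (δ + a) ≤ x m ∧ x m ≤ 2 * (m : ℝ) * (δ + a) := by
    rcases Nat.eq_zero_or_pos m with h | h
    · subst h
      rw [hx0]
      constructor <;> push_cast <;> linarith
    · exact hxj m h (by omega) (by omega)
  have hhi : (2 * (m : ℝ) + 3) * (δ + a) ≤ x (m + 1 + 1) ∧
      x (m + 1 + 1) ≤ (2 * (m : ℝ) + 4) * (δ + a) := by
    rcases Nat.eq_or_lt_of_le hi2 with h | h
    · subst h
      rw [hxn]
      constructor <;> push_cast <;> linarith
    · have := hxj (m + 1 + 1) (by omega) (by omega) (by omega)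
      push_cast at this
      constructor <;> linarith [this.1, this.2]
  simp only [Nat.add_sub_cancel]
  constructor
  · intro hx
    have hF1 := hcond t (2 * m + 1) (by omega) (by omega)
    have e : ((2 * m + 1 : ℕ) : ℝ) * (δ + a) = x (m + 1) := by rw [hx]; push_cast; ring
    rw [e, Even.neg_one_pow ⟨m + 1, by ring⟩] at hF1
    push_cast at hx
    have := morseV_deriv_anti δ a (x (m + 1) - x m) (x (m + 1 + 1) - x (m + 1)) ha
      (by linarith [hlo.2]) (by linarith [hlo.1, hhi.1])
    linarith
  · intro hx
    have hF1 := hcond t (2 * m + 2) (by omega) (by omega)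
    have e : ((2 * m + 2 : ℕ) : ℝ) * (δ + a) = x (m + 1) := by rw [hx]; push_cast; ring
    rw [e, Odd.neg_one_pow ⟨m + 1, by ring⟩] at hF1
    push_cast at hx
    have := morseV_deriv_anti δ a (x (m + 1 + 1) - x (m + 1)) (x (m + 1) - x m) ha
      (by linarith [hhi.1]) (by linarith [hlo.2, hhi.2])
    linarith
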